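/- For any string S over the binary alphabet Σ₂ = {0, 1} with |S| = d ≥ 3, the total number of MAWs added when the character 0 is appended to S is at most d − 1; that is, |MAW(S0) \ MAW(S)| = |M₁| + |M₂| + |M₃| ≤ d − 1. -/

import Mathlib

/-!
Write `A = MAW (S0) \ MAW (S)` and split it by whether `w.dropLast` occurs in `S`.

* If `w.dropLast` does not occur in `S` (types 1 and 2), then `w.dropLast` is the *shortest* suffix
  `v` of `S0` that is absent from `S`: it is absent, while its tail is present
  (`dropLast_of_new`, `short_suffix_unique`). So there are at most two such words, `v0` and `v1`.
* If `w.dropLast` occurs in `S` (type 3), then `w = a u 0` where `u` is a suffix of `S`, `u0` is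
  absent from `S`, and `a u 1` occurs in `S` (`type3_form`). The letter `a` differs from the one
  preceding the suffix `u`, so over a binary alphabet `w` is determined by its length, and
  `|w| ≤ d`. Moreover `|u0| ≥ |v|` whenever `v` exists, so `|v| + 1 ≤ |w| ≤ d`.

If no word of the first kind exists, the count is at most `d - 1` since `2 ≤ |w| ≤ d`. Otherwise
it is at most `2 + (d - |v|)`, which is enough for `|v| ≥ 3`, and one unit can be saved when
`|v| = 2` and only one of `v0`, `v1` is present. The remaining cases are small: for `v = 0`, `S` is
a power of `1` and there is no word of type 3; for `v = 00`, length `3` is impossible in type 3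
(`type3_length_ne_three`); for `v = 10` with `100` present, length `d` is impossible
(`type3_length_ne_full`), because `S` would be `a 1 ⋯ 1`, which has no factor `00`.
-/

open scoped symmDiff

/-- A string `w` occurs in a string `T` iff it is a contiguous substring (infix) of `T`. -/
def Occurs {α : Type*} (w T : List α) : Prop := w <:+: T

/-- `w` is a minimal absent word (MAW) for `T`: `w` is nonempty, `w` does not occur in `T`,
but `w` minus its first character and `w` minus its last character both occur in `T`
(equivalently, every proper substring of `w` occurs in `T`). -/
def IsMAW {α : Type*} (w T : List α) : Prop :=
  w ≠ [] ∧ ¬ Occurs w T ∧ Occurs w.tail T ∧ Occurs w.dropLast T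

/-- The set of all minimal absent words for `T`. -/
def MAW {α : Type*} (T : List α) : Set (List α) := {w | IsMAW w T}

/-- Type-1 added MAWs when `0` (= `false`) is appended to the binary window `S`:
`w ∈ MAW(S0) \ MAW(S)` such that neither `w[2..]` nor `w[..|w|-1]` occurs in `S`. -/
def M1 (S : List Bool) : Set (List Bool) :=
  {w | w ∈ MAW (S ++ [false]) ∧ w ∉ MAW S ∧ ¬ Occurs w.tail S ∧ ¬ Occurs w.dropLast S}

/-- Type-2 added MAWs when `0` (= `false`) is appended to the binary window `S`:
`w ∈ MAW(S0) \ MAW(S)` such that `w[2..]` occurs in `S` but `w[..|w|-1]` does not. -/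
def M2 (S : List Bool) : Set (List Bool) :=
  {w | w ∈ MAW (S ++ [false]) ∧ w ∉ MAW S ∧ Occurs w.tail S ∧ ¬ Occurs w.dropLast S}

/-- Type-3 added MAWs when `0` (= `false`) is appended to the binary window `S`:
`w ∈ MAW(S0) \ MAW(S)` such that `w[2..]` does not occur in `S` but `w[..|w|-1]` does. -/
def M3 (S : List Bool) : Set (List Bool) :=
  {w | w ∈ MAW (S ++ [false]) ∧ w ∉ MAW S ∧ ¬ Occurs w.tail S ∧ Occurs w.dropLast S}

/-! ### The shortest absent suffix -/

lemma new_suffix {x S : List Bool} {c : Bool} (h : x <:+: S ++ [c]) (hn : ¬ x <:+: S) :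
    x <:+ S ++ [c] := by
  rcases List.infix_concat_iff.1 h with h | h
  · exact h
  · exact absurd h hn

lemma infix_of_concat {x S : List Bool} {b c : Bool} (h : x ++ [b] <:+: S ++ [c]) : x <:+: S := by
  obtain ⟨p, q, h⟩ := h
  rcases List.eq_nil_or_concat' q with rfl | ⟨q, e, rfl⟩
  · rw [List.append_nil, ← List.append_assoc] at h
    exact ⟨p, [], by simpa using (List.append_inj' h rfl).1⟩
  · rw [← List.append_assoc] at h
    exact ⟨p, b :: q, by simpa using (List.append_inj' h rfl).1⟩

/-- The words of `MAW (S0) \ MAW S` whose longest proper prefix is absent from `S`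
(types 1 and 2). -/
def PreNew (S : List Bool) : Set (List Bool) :=
  {w | w ∈ MAW (S ++ [false]) \ MAW S ∧ ¬ w.dropLast <:+: S}

/-- A suffix of `S0` absent from `S` whose tail is present in `S`, i.e. the shortest absent
suffix. -/
def IsShort (S v : List Bool) : Prop :=
  v <:+ S ++ [false] ∧ ¬ v <:+: S ∧ v.tail <:+: S

lemma IsShort.ne_nil {S v : List Bool} (h : IsShort S v) : v ≠ [] := by
  rintro rfl
  exact h.2.1 (List.nil_infix)

lemma IsShort.length_le {S v x : List Bool} (h : IsShort S v) (hx : x <:+ S ++ [false])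
    (hn : ¬ x <:+: S) : v.length ≤ x.length := by
  by_contra hlt
  apply hn
  have h1 : x <:+ v.tail := by
    apply List.suffix_of_suffix_length_le hx ((List.tail_suffix v).trans h.1)
    simp; omega
  exact h1.isInfix.trans h.2.2

lemma short_suffix_unique {S v v' : List Bool} (h : IsShort S v) (h' : IsShort S v') :
    v = v' := by
  have h1 := h.length_le h'.1 h'.2.1
  exact (List.suffix_of_suffix_length_le h.1 h'.1 h1).eq_of_length
    (le_antisymm h1 (h'.length_le h.1 h.2.1))

lemma dropLast_of_new {S w : List Bool} (hw : w ∈ PreNew S) : IsShort S w.dropLast := by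
  obtain ⟨⟨⟨hne, -, ht, hd⟩, -⟩, hn⟩ := hw
  refine ⟨new_suffix hd hn, hn, ?_⟩
  rcases List.eq_nil_or_concat' w with rfl | ⟨v, b, rfl⟩
  · exact absurd rfl hne
  · rw [List.dropLast_concat] at hn ⊢
    cases v with
    | nil => exact List.nil_infix
    | cons a u => exact infix_of_concat (b := b) (c := false) ht

/-! ### Words of type 3 -/

/-- The shape of type-3 words: `w = a u 0`, where `u` is a suffix of `S` and another occurrence
of `u` in `S` is preceded by `a` and followed by `1`. -/
lemma type3_form {S w : List Bool} (hw : w ∈ M3 S) :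
    ∃ a u, w = a :: (u ++ [false]) ∧ u <:+ S ∧ ¬ u ++ [false] <:+: S ∧
      (a :: u) ++ [true] <:+: S ∧ ¬ (a :: u) <:+ S := by
  obtain ⟨⟨hne, hab, ht, -⟩, -, htn, hd⟩ := hw
  cases w with
  | nil => exact absurd rfl hne
  | cons a t =>
    simp only [List.tail_cons] at ht htn
    have hs := new_suffix ht htn
    rcases List.eq_nil_or_concat' t with rfl | ⟨u, b, rfl⟩
    · exact absurd List.nil_infix htn
    obtain ⟨p, hp⟩ := hs
    rw [← List.append_assoc] at hp
    obtain ⟨hS, hb⟩ := List.append_inj' hp rfl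
    obtain rfl : b = false := by simpa using hb
    have hd' : a :: u <:+: S := by
      have : (a :: (u ++ [false])).dropLast = a :: u := by
        rw [← List.cons_append, List.dropLast_concat]
      rw [← this]; exact hd
    have hns : ¬ (a :: u) <:+ S := by
      rintro ⟨q, hq⟩
      exact hab ⟨q, [], by rw [← hq]; simp⟩
    refine ⟨a, u, rfl, ⟨p, hS⟩, htn, ?_, hns⟩
    obtain ⟨x, y, hxy⟩ := hd'
    cases y with
    | nil => exact absurd ⟨x, by simpa using hxy⟩ hns
    | cons c y =>
      cases c with
      | true => exact ⟨x, y, by rw [← hxy]; simp⟩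
      | false => exact absurd ⟨x ++ [a], y, by rw [← hxy]; simp⟩ htn

lemma type3_length_le {S w : List Bool} (hw : w ∈ M3 S) : 2 ≤ w.length ∧ w.length ≤ S.length := by
  obtain ⟨a, u, rfl, -, -, h, -⟩ := type3_form hw
  have := h.length_le
  simp at this ⊢
  omega

/-- Over a binary alphabet a type-3 word `a u 0` is determined by its length: `u` is the suffix of
`S` of the given length and `a` is the letter that does not precede it. -/
lemma type3_injOn (S : List Bool) : Set.InjOn List.length (M3 S) := by
  intro w hw w' hw' hl
  obtain ⟨a, u, rfl, hu, -, hi, hn⟩ := type3_form hw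
  obtain ⟨a', u', rfl, hu', -, -, hn'⟩ := type3_form hw'
  have hl' : u.length = u'.length := by simpa using hl
  obtain rfl : u = u' :=
    (List.suffix_of_suffix_length_le hu hu' hl'.le).eq_of_length hl'
  have hlen := hi.length_le
  obtain ⟨p, rfl⟩ := hu
  rcases List.eq_nil_or_concat' p with rfl | ⟨p, e, rfl⟩
  · simp at hlen
  have key : ∀ b, ¬ (b :: u) <:+ (p ++ [e]) ++ u → b ≠ e := by
    rintro b hb rfl
    exact hb ⟨p, by simp⟩
  have h1 := key a hn
  have h2 := key a' hn'
  have : a = a' := by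
    revert h1 h2; cases a <;> cases a' <;> cases e <;> simp
  rw [this]

/-! ### The exceptional short cases -/

/-- A word `u` with `u t = e u` is a power of the letter `t`. -/
lemma eq_replicate_of_shift {t : Bool} : ∀ {u : List Bool} {e : Bool}, u ++ [t] = e :: u →
    u = List.replicate u.length t ∧ e = t
  | [], e, h => by simpa using h.symm
  | x :: u, e, h => by
    simp only [List.cons_append, List.cons.injEq] at h
    obtain ⟨h1, h2⟩ := eq_replicate_of_shift h.2
    refine ⟨?_, h.1.symm.trans h2⟩
    rw [List.length_cons, List.replicate_succ, ← h1, h2]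

lemma type3_length_ne_three {S w : List Bool} (hv : IsShort S [false, false])
    (hw : w ∈ M3 S) : w.length ≠ 3 := by
  intro hl
  obtain ⟨a, u, rfl, ⟨p, rfl⟩, -, hi, hn⟩ := type3_form hw
  have hul : u.length = 1 := by simpa using hl
  obtain ⟨c, rfl⟩ := List.length_eq_one_iff.1 hul
  obtain ⟨⟨q, hq⟩, hnv, -⟩ := hv
  have hc : c = false := by
    have := congrArg List.reverse hq
    simp at this
    exact this.1
  subst hc
  have hlen := hi.length_le
  rcases List.eq_nil_or_concat' p with rfl | ⟨p, e, rfl⟩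
  · simp at hlen
  -- Neither `a` nor the letter `e` preceding the final `0` can be `0`, as `00` is absent.
  have ha : a ≠ false := by
    rintro rfl
    exact hnv ((List.IsPrefix.isInfix ⟨[true], rfl⟩).trans hi)
  have he : e ≠ false := by
    rintro rfl
    exact hnv ⟨p, [], by simp⟩
  exact hn ⟨p, by cases a <;> cases e <;> simp_all⟩

lemma type3_length_ne_full {S w : List Bool} (h00 : [false, false] <:+: S)
    (hw : w ∈ M3 S) : w.length ≠ S.length := by
  intro hl
  obtain ⟨a, u, rfl, hu, -, hi, hn⟩ := type3_form hw
  have hS : (a :: u) ++ [true] = S := hi.eq_of_length (by simpa using hl)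
  subst hS
  have h1 : u <:+ u ++ [true] :=
    List.suffix_of_suffix_length_le hu ⟨[a], rfl⟩ (by simp)
  obtain ⟨p, hp⟩ := h1
  have hpl : p.length = 1 := by
    have := congrArg List.length hp
    simp at this
    omega
  obtain ⟨e, rfl⟩ := List.length_eq_one_iff.1 hpl
  obtain ⟨hr, -⟩ := eq_replicate_of_shift (t := true) (u := u) (e := e) hp.symm
  obtain ⟨x, y, hxy⟩ := h00
  have hmem : false ∈ u ++ [true] := by
    cases x with
    | nil =>
      simp at hxy
      rw [← hxy.2]; simp
    | cons c x =>
      simp at hxy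
      rw [← hxy.2]; simp
  rw [hr] at hmem
  simp at hmem

lemma type3_empty_of_short_zero {S : List Bool} (hv : IsShort S [false]) : M3 S = ∅ := by
  have hall : ∀ b ∈ S, b = true := by
    intro b hb
    by_contra hne
    have : b = false := by simpa using hne
    subst this
    exact hv.2.1 ((List.singleton_infix_iff _ _).2 hb)
  refine Set.eq_empty_iff_forall_notMem.2 fun w hw => ?_
  obtain ⟨a, u, rfl, -, -, hi, hn⟩ := type3_form hw
  have hi' : a :: u <:+: S := (List.IsPrefix.isInfix ⟨[true], rfl⟩).trans hi
  have hS : S = List.replicate S.length true := List.eq_replicate_iff.2 ⟨rfl, hall⟩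
  have hau : a :: u = List.replicate (a :: u).length true :=
    List.eq_replicate_iff.2 ⟨rfl, fun b hb => hall b (hi'.subset hb)⟩
  apply hn
  refine ⟨List.replicate (S.length - (a :: u).length) true, ?_⟩
  have hle := hi'.length_le
  rw [hau, List.length_replicate, ← List.replicate_add, Nat.sub_add_cancel hle, ← hS]

/-! ### Counting -/

lemma type3_ncard_le {S : List Bool} {m n : ℕ}
    (h : ∀ w ∈ M3 S, m ≤ w.length ∧ w.length ≤ n) : (M3 S).ncard ≤ n + 1 - m := by
  rw [← (type3_injOn S).ncard_image]
  calc (List.length '' M3 S).ncard ≤ (Set.Icc m n).ncard := by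
        apply Set.ncard_le_ncard _ (Set.finite_Icc m n)
        rintro _ ⟨w, hw, rfl⟩
        exact h w hw
    _ = n + 1 - m := by
        rw [← Finset.coe_Icc, Set.ncard_coe_finset, Nat.card_Icc]

lemma IsShort.lt_type3_length {S v w : List Bool} (hv : IsShort S v) (hw : w ∈ M3 S) :
    v.length + 1 ≤ w.length := by
  obtain ⟨a, u, rfl, ⟨p, hp⟩, hn, -, -⟩ := type3_form hw
  have := hv.length_le ⟨p, by rw [← hp]; simp⟩ hn
  simpa using this

lemma finite_MAW (T : List Bool) : (MAW T).Finite := by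
  apply (List.finite_length_le Bool (T.length + 1)).subset
  rintro w ⟨-, -, ht, -⟩
  have := List.IsInfix.length_le ht
  simp at this
  simp
  omega

lemma preNew_union_type3 (S : List Bool) : MAW (S ++ [false]) \ MAW S = PreNew S ∪ M3 S := by
  ext w
  constructor
  · intro hw
    by_cases hd : w.dropLast <:+: S
    · refine Or.inr ⟨hw.1, hw.2, fun ht => hw.2 ⟨hw.1.1, fun h => ?_, ht, hd⟩, hd⟩
      exact hw.1.2.1 (List.IsInfix.trans h ⟨[], [false], rfl⟩)
    · exact Or.inl ⟨hw, hd⟩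
  · rintro (hw | hw)
    · exact hw.1
    · exact ⟨hw.1, hw.2.1⟩

lemma preNew_eq (S : List Bool) : PreNew S = M1 S ∪ M2 S := by
  ext w
  simp only [PreNew, M1, M2, Occurs, Set.mem_ofPred_eq, Set.mem_union, Set.mem_sdiff]
  tauto

lemma preNew_subset {S v : List Bool} (hv : IsShort S v) :
    PreNew S ⊆ {v ++ [false], v ++ [true]} := by
  intro w hw
  have h := short_suffix_unique (dropLast_of_new hw) hv
  have h2 := List.dropLast_append_getLast hw.1.1.1
  generalize w.getLast hw.1.1.1 = b at h2
  rw [← h2, h]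
  cases b <;> simp

lemma preNew_add_type3_le (S : List Bool) (hd : 3 ≤ S.length) :
    (PreNew S).ncard + (M3 S).ncard ≤ S.length - 1 := by
  rcases (PreNew S).eq_empty_or_nonempty with h0 | ⟨w₀, hw₀⟩
  · have := type3_ncard_le fun w (hw : w ∈ M3 S) => type3_length_le hw
    rw [h0, Set.ncard_empty]
    omega
  obtain ⟨v, hv⟩ : ∃ v, IsShort S v := ⟨_, dropLast_of_new hw₀⟩
  have hsub := preNew_subset hv
  have h2 : (PreNew S).ncard ≤ 2 :=
    (Set.ncard_le_ncard hsub (Set.toFinite _)).trans (by simp)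
  have h3 := type3_ncard_le fun w (hw : w ∈ M3 S) =>
    (⟨hv.lt_type3_length hw, (type3_length_le hw).2⟩ : v.length + 1 ≤ _ ∧ _ ≤ S.length)
  by_cases hv3 : 3 ≤ v.length
  · omega
  match v, hv with
  | [], hv => exact absurd rfl hv.ne_nil
  | [x], hv =>
    obtain ⟨p, hp⟩ := hv.1
    obtain rfl : x = false := by simpa using (List.append_inj' hp rfl).2
    rw [type3_empty_of_short_zero hv, Set.ncard_empty]
    omega
  | [x, y], hv =>
    obtain ⟨p, hp⟩ := hv.1
    obtain rfl : y = false := by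
      have := congrArg List.reverse hp
      simp at this
      exact this.1
    cases x with
    | false =>
      have := type3_ncard_le (m := 4) fun w (hw : w ∈ M3 S) => by
        have h1 := hv.lt_type3_length hw
        have h2 := type3_length_ne_three hv hw
        exact ⟨by simp at h1; omega, (type3_length_le hw).2⟩
      omega
    | true =>
      by_cases h100 : [true, false] ++ [false] ∈ PreNew S
      · -- As `100` is minimal absent, `00` occurs in `S0`, hence in `S` because `S0` ends in `10`.
        have h00 : [false, false] <:+: S := by
          by_contra hn
          obtain ⟨q, hq⟩ := new_suffix h100.1.1.2.2.1 hn
          have := congrArg List.reverse (hp.trans hq.symm)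
          simp at this
        have := type3_ncard_le (n := S.length - 1) fun w (hw : w ∈ M3 S) => by
          have h1 := hv.lt_type3_length hw
          have h2 := type3_length_ne_full h00 hw
          have h3 := (type3_length_le hw).2
          exact ⟨h1, by omega⟩
        simp at this
        omega
      · have h1 : (PreNew S).ncard ≤ 1 := by
          rw [← Set.ncard_singleton ([true, false] ++ [true])]
          apply Set.ncard_le_ncard _ (Set.toFinite _)
          intro w hw
          rcases hsub hw with rfl | h
          · exact absurd hw h100
          · exact h
        simp at h3
        omega
  | _ :: _ :: _ :: _, _ => simp at hv3

theorem binary_maw_added_le (S : List Bool) (d : ℕ) (hlen : S.length = d) (hd : 3 ≤ d) :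
    (MAW (S ++ [false]) \ MAW S).ncard = (M1 S).ncard + (M2 S).ncard + (M3 S).ncard ∧
    (MAW (S ++ [false]) \ MAW S).ncard ≤ d - 1 := by
  subst hlen
  have hfin : (MAW (S ++ [false]) \ MAW S).Finite := (finite_MAW _).subset Set.sdiff_subset
  have f3 : (M3 S).Finite := hfin.subset fun w hw => ⟨hw.1, hw.2.1⟩
  have f1 : (M1 S).Finite := hfin.subset fun w hw => ⟨hw.1, hw.2.1⟩
  have f2 : (M2 S).Finite := hfin.subset fun w hw => ⟨hw.1, hw.2.1⟩
  have fP : (PreNew S).Finite := hfin.subset fun w hw => hw.1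
  have hdisj : Disjoint (PreNew S) (M3 S) :=
    Set.disjoint_left.2 fun w h h' => h.2 h'.2.2.2
  have hdisj' : Disjoint (M1 S) (M2 S) :=
    Set.disjoint_left.2 fun w h h' => h.2.2.1 h'.2.2.1
  rw [preNew_union_type3, Set.ncard_union_eq hdisj fP f3]
  refine ⟨?_, preNew_add_type3_le S hd⟩
  rw [preNew_eq, Set.ncard_union_eq hdisj' f1 f2]
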